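/- arXiv:1809.02188 — 2 statements merged into one kernel-verified Lean document; each statement's English description precedes it below -/
import Mathlib

section
/- Let h : ℝ → [0,∞) and t : ℝ → ℝ be measurable, and suppose Z(η) := ∫_ℝ h(x)·exp(η·t(x)) dx is finite and positive for all η in an open interval I ⊆ ℝ. Let F(c; η) := ∫_{-∞}^{c} h(x)·exp(η·t(x) − log Z(η)) dx, and fix v < w such that g(η) := log(F(w; η) − F(v; η)) is well-defined and differentiable on I. Then for every η₀ ∈ I, the mean of t under the truncated density p̂(x | η₀) = 1_{[v,w]}(x)·h(x)·exp(η₀·t(x) − Â(η₀)), where Â(η₀) = log ∫_v^w h(x)·exp(η₀·t(x)) dx, satisfies E_{p̂}[t] = E_{p}[t] + g′(η₀), where E_{p}[t] is the mean of t under the untruncated density p(x | η₀) = h(x)·exp(η₀·t(x) − log Z(η₀)). -/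
open MeasureTheory

/-!
Truncating an exponential family to a set `s` only restricts its base measure to `s`, so the
truncated log-partition function `Â` is the log-partition function `A` of the restricted measure.
The untruncated family gives `s` the mass `exp (Â η - A η)`; hence `g = Â - A`, and the derivative
of a log-partition function is the mean of the sufficient statistic. The last fact is the formula
for the derivative of the cumulant generating function of `t` under the measure with density `h`.
-/

section ExponentialFamily

open Real Set Filter Topology ProbabilityTheory

lemma setIntegral_Iic_sub_setIntegral_Iic {μ : Measure ℝ} [NullSingletonClass μ]
    {f : ℝ → ℝ} {v w : ℝ} (hvw : v ≤ w) (hf : IntegrableOn f (Iic w) μ) :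
    ∫ x in Iic w, f x ∂μ - ∫ x in Iic v, f x ∂μ = ∫ x in Icc v w, f x ∂μ := by
  rw [intervalIntegral.integral_Iic_sub_Iic (hf.mono_set (Iic_subset_Iic.2 hvw)) hf,
    intervalIntegral.integral_of_le hvw, integral_Icc_eq_integral_Ioc]

variable {Ω : Type*} [MeasurableSpace Ω] {μ : Measure Ω} {h t : Ω → ℝ} {η : ℝ} {s : Set Ω}

/-- The natural parameters `η` of the exponential family with base density `h` with respect to `μ`
and sufficient statistic `t`: those with a finite normalizing constant, which may be `0`. -/
def naturalParameterSet (μ : Measure Ω) (h t : Ω → ℝ) : Set ℝ :=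
  {η | Integrable (fun x => h x * exp (η * t x)) μ}

/-- The log-partition function `A` of the exponential family with base density `h` with respect to
`μ` and sufficient statistic `t`. That of the family truncated to `s` is
`logPartition (μ.restrict s) h t`. -/
noncomputable def logPartition (μ : Measure Ω) (h t : Ω → ℝ) (η : ℝ) : ℝ :=
  log (∫ x, h x * exp (η * t x) ∂μ)

/-- The density `p(x | η)` of the exponential family, with respect to `μ`. That of the family
truncated to `s` is `expFamilyDensity (μ.restrict s) h t`, with respect to `μ.restrict s`, so that
no indicator function of `s` is needed. -/
noncomputable def expFamilyDensity (μ : Measure Ω) (h t : Ω → ℝ) (η : ℝ) (x : Ω) : ℝ :=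
  h x * exp (η * t x - logPartition μ h t η)

/-- The mean of the sufficient statistic `t` under the density `p(x | η)`. -/
noncomputable def expFamilyMean (μ : Measure Ω) (h t : Ω → ℝ) (η : ℝ) : ℝ :=
  ∫ x, t x * expFamilyDensity μ h t η x ∂μ

lemma naturalParameterSet_subset_restrict :
    naturalParameterSet μ h t ⊆ naturalParameterSet (μ.restrict s) h t :=
  fun _ hη => Integrable.restrict hη

lemma expFamilyDensity_eq_exp_neg_mul (x : Ω) :
    expFamilyDensity μ h t η x = exp (-logPartition μ h t η) * (h x * exp (η * t x)) := by
  rw [expFamilyDensity, sub_eq_neg_add, exp_add, mul_left_comm]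

lemma integrable_expFamilyDensity (hη : η ∈ naturalParameterSet μ h t) :
    Integrable (expFamilyDensity μ h t η) μ := by
  simpa only [← expFamilyDensity_eq_exp_neg_mul] using
    Integrable.const_mul hη (exp (-logPartition μ h t η))

lemma setIntegral_expFamilyDensity :
    ∫ x in s, expFamilyDensity μ h t η x ∂μ =
      exp (-logPartition μ h t η) * ∫ x in s, h x * exp (η * t x) ∂μ := by
  simp only [expFamilyDensity_eq_exp_neg_mul, integral_const_mul]

lemma log_setIntegral_expFamilyDensity (hs : ∫ x in s, h x * exp (η * t x) ∂μ ≠ 0) :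
    log (∫ x in s, expFamilyDensity μ h t η x ∂μ) =
      logPartition (μ.restrict s) h t η - logPartition μ h t η := by
  rw [setIntegral_expFamilyDensity, log_mul (exp_ne_zero _) hs, log_exp, neg_add_eq_sub]
  rfl

lemma integral_withDensity_ofReal (hh : AEMeasurable h μ) (hh0 : 0 ≤ᵐ[μ] h) (f : Ω → ℝ) :
    ∫ x, f x ∂μ.withDensity (fun x => ENNReal.ofReal (h x)) = ∫ x, h x * f x ∂μ := by
  rw [integral_withDensity_eq_integral_toReal_smul₀ hh.ennreal_ofReal (by simp)]
  refine integral_congr_ae (hh0.mono fun x hx => ?_)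
  simp only [ENNReal.toReal_ofReal hx, smul_eq_mul]

lemma integrableExpSet_withDensity_ofReal (hh : AEMeasurable h μ) (hh0 : 0 ≤ᵐ[μ] h) :
    integrableExpSet t (μ.withDensity fun x => ENNReal.ofReal (h x)) =
      naturalParameterSet μ h t := by
  ext η
  refine (integrable_withDensity_iff_integrable_smul₀' hh.ennreal_ofReal (by simp)).trans
    (integrable_congr (hh0.mono fun x hx => ?_))
  simp only [ENNReal.toReal_ofReal hx, smul_eq_mul]

lemma mgf_withDensity_ofReal (hh : AEMeasurable h μ) (hh0 : 0 ≤ᵐ[μ] h) :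
    mgf t (μ.withDensity fun x => ENNReal.ofReal (h x)) =
      fun η => ∫ x, h x * exp (η * t x) ∂μ :=
  funext fun _ => integral_withDensity_ofReal hh hh0 _

lemma cgf_withDensity_ofReal (hh : AEMeasurable h μ) (hh0 : 0 ≤ᵐ[μ] h) :
    cgf t (μ.withDensity fun x => ENNReal.ofReal (h x)) = logPartition μ h t :=
  funext fun η => congrArg log (congrFun (mgf_withDensity_ofReal hh hh0) η)

lemma continuousAt_integral_mul_exp (hh : AEMeasurable h μ) (hh0 : 0 ≤ᵐ[μ] h)
    (hη : η ∈ interior (naturalParameterSet μ h t)) :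
    ContinuousAt (fun η => ∫ x, h x * exp (η * t x) ∂μ) η := by
  rw [← integrableExpSet_withDensity_ofReal hh hh0] at hη
  rw [← mgf_withDensity_ofReal hh hh0]
  exact (differentiableAt_mgf hη).continuousAt

theorem hasDerivAt_logPartition (hh : AEMeasurable h μ) (hh0 : 0 ≤ᵐ[μ] h)
    (hη : η ∈ interior (naturalParameterSet μ h t)) :
    HasDerivAt (logPartition μ h t) (expFamilyMean μ h t η) η := by
  let ν := μ.withDensity fun x => ENNReal.ofReal (h x)
  have hcgf : cgf t ν = logPartition μ h t := cgf_withDensity_ofReal hh hh0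
  have hην : η ∈ interior (integrableExpSet t ν) := by
    rwa [integrableExpSet_withDensity_ofReal hh hh0]
  have hint : Integrable (fun x => exp (η * t x)) ν :=
    interior_subset (s := integrableExpSet t ν) hην
  have hmean : deriv (cgf t ν) η = expFamilyMean μ h t η := calc
    deriv (cgf t ν) η = ∫ x, t x ∂ν.tilted (η * t ·) := (integral_tilted_mul_self hην).symm
    _ = ∫ x, exp (η * t x - logPartition μ h t η) * t x ∂ν := by
      simp only [integral_tilted_mul_eq_cgf t hint, hcgf, smul_eq_mul]
    _ = ∫ x, h x * (exp (η * t x - logPartition μ h t η) * t x) ∂μ :=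
      integral_withDensity_ofReal hh hh0 _
    _ = expFamilyMean μ h t η := by
      simp only [expFamilyMean, expFamilyDensity, ← mul_assoc, mul_comm (t _)]
  rw [← hmean, ← hcgf]
  exact (analyticAt_cgf hην).differentiableAt.hasDerivAt

theorem truncated_mean_identity_general (hh : AEMeasurable h μ) (hh0 : 0 ≤ᵐ[μ] h)
    (hη : η ∈ interior (naturalParameterSet μ h t))
    (hs : ∫ x in s, expFamilyDensity μ h t η x ∂μ ≠ 0) :
    HasDerivAt (fun η => log (∫ x in s, expFamilyDensity μ h t η x ∂μ))
      (expFamilyMean (μ.restrict s) h t η - expFamilyMean μ h t η) η := by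
  have hηs : η ∈ interior (naturalParameterSet (μ.restrict s) h t) :=
    interior_mono naturalParameterSet_subset_restrict hη
  have hh0s : 0 ≤ᵐ[μ.restrict s] h := ae_restrict_of_ae hh0
  have hZs : ∫ x in s, h x * exp (η * t x) ∂μ ≠ 0 := by
    rw [setIntegral_expFamilyDensity] at hs
    exact right_ne_zero_of_mul hs
  have hlog : (fun η => log (∫ x in s, expFamilyDensity μ h t η x ∂μ)) =ᶠ[𝓝 η]
      logPartition (μ.restrict s) h t - logPartition μ h t :=
    ((continuousAt_integral_mul_exp hh.restrict hh0s hηs).eventually_ne hZs).mono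
      fun _ => log_setIntegral_expFamilyDensity
  exact ((hasDerivAt_logPartition hh.restrict hh0s hηs).sub
    (hasDerivAt_logPartition hh hh0 hη)).congr_of_eventuallyEq hlog

end ExponentialFamily

/-- Mean identity of Lemma 1: the mean of `t` under the exponential family truncated to
`[v,w]` equals the mean under the untruncated family plus the derivative of
`g(η) = log(F(w;η) - F(v;η))`. -/
theorem truncated_mean_identity
    (h t : ℝ → ℝ) (hh : Measurable h) (hh0 : ∀ x, 0 ≤ h x) (ht : Measurable t)
    (a b : ℝ)
    (hfin : ∀ η ∈ Set.Ioo a b, Integrable (fun x => h x * Real.exp (η * t x)) volume)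
    (hpos : ∀ η ∈ Set.Ioo a b, 0 < ∫ x, h x * Real.exp (η * t x))
    (A : ℝ → ℝ) (hA : ∀ η, A η = Real.log (∫ x, h x * Real.exp (η * t x)))
    (F : ℝ → ℝ → ℝ)
    (hF : ∀ c η, F c η = ∫ x in Set.Iic c, h x * Real.exp (η * t x - A η))
    (v w : ℝ) (hvw : v < w)
    (hwell : ∀ η ∈ Set.Ioo a b, 0 < F w η - F v η)
    (g : ℝ → ℝ) (hg : ∀ η, g η = Real.log (F w η - F v η))
    (hgdiff : ∀ η ∈ Set.Ioo a b, DifferentiableAt ℝ g η)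
    (Ahat : ℝ → ℝ)
    (hAhat : ∀ η, Ahat η = Real.log (∫ x in Set.Icc v w, h x * Real.exp (η * t x))) :
    ∀ η₀ ∈ Set.Ioo a b,
      (∫ x in Set.Icc v w, t x * (h x * Real.exp (η₀ * t x - Ahat η₀)))
        = (∫ x, t x * (h x * Real.exp (η₀ * t x - A η₀))) + deriv g η₀ := by
  intro η₀ hη₀
  obtain rfl : A = logPartition volume h t := funext hA
  obtain rfl : Ahat = logPartition (volume.restrict (Set.Icc v w)) h t := funext hAhat
  have hF_sub : ∀ η ∈ Set.Ioo a b,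
      F w η - F v η = ∫ x in Set.Icc v w, expFamilyDensity volume h t η x := fun η hη => by
    rw [hF, hF]
    exact setIntegral_Iic_sub_setIntegral_Iic hvw.le
      (integrable_expFamilyDensity (hfin η hη)).integrableOn
  have hg_eq : g =ᶠ[nhds η₀]
      fun η => Real.log (∫ x in Set.Icc v w, expFamilyDensity volume h t η x) := by
    filter_upwards [isOpen_Ioo.mem_nhds hη₀] with η hη
    rw [hg, hF_sub η hη]
  have hderiv := truncated_mean_identity_general hh.aemeasurable (ae_of_all _ hh0)
    (interior_maximal hfin isOpen_Ioo hη₀) (hF_sub η₀ hη₀ ▸ (hwell η₀ hη₀).ne')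
  exact sub_eq_iff_eq_add'.1 (hderiv.congr_of_eventuallyEq hg_eq).deriv.symm
end

section
/- For every b > 0 and every z ∈ ℝ, the Laplace density equals a scale mixture of centered normal densities with exponentially distributed variance: (1/(2b))·exp(−|z|/b) = ∫₀^∞ (1/√(2π·σ²))·exp(−z²/(2σ²)) · ℓ·exp(−ℓ·σ²) dσ², where ℓ = 1/(2b²) and the integral is over σ² ∈ (0,∞). -/
open MeasureTheory

/-! Substituting `s = t²` and completing the square, `p t² + q / t² = p (t - r / t)² + 2 √(p q)`
with `r = √(q / p)`, reduces the mixture integral to a Gaussian composed with `t ↦ t - r / t`. That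
composition leaves the integral of an even function over `(0, ∞)` unchanged (Cauchy–Schlömilch):
`t ↦ t - r / t` maps `(0, ∞)` bijectively onto `ℝ` with Jacobian `1 + r / t²`, and the reflection
`t ↦ r / t` shows that the two summands of the Jacobian contribute equally. -/

section CauchySchlomilch

open Set

variable {E : Type*} [NormedAddCommGroup E] {a : ℝ}

lemma hasDerivAt_const_div (a : ℝ) {t : ℝ} (ht : t ≠ 0) :
    HasDerivAt (fun t : ℝ ↦ a / t) (-a / t ^ 2) t := by
  simpa using (hasDerivAt_const t a).fun_div (hasDerivAt_id' t) ht

lemma hasDerivAt_sub_div (a : ℝ) {t : ℝ} (ht : t ≠ 0) :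
    HasDerivAt (fun t : ℝ ↦ t - a / t) (1 + a / t ^ 2) t := by
  simpa only [neg_div, sub_neg_eq_add] using (hasDerivAt_id' t).fun_sub (hasDerivAt_const_div a ht)

lemma antitoneOn_const_div (ha : 0 ≤ a) : AntitoneOn (fun t : ℝ ↦ a / t) (Ioi 0) :=
  fun _ hx _ _ hxy ↦ div_le_div_of_nonneg_left ha hx hxy

lemma strictMonoOn_sub_div (ha : 0 ≤ a) : StrictMonoOn (fun t : ℝ ↦ t - a / t) (Ioi 0) := by
  simpa only [sub_eq_add_neg] using! strictMonoOn_id.add_monotone (antitoneOn_const_div ha).neg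

lemma image_sub_div_Ioi (ha : 0 < a) : (fun t : ℝ ↦ t - a / t) '' Ioi 0 = univ := by
  refine eq_univ_of_forall fun u ↦ ?_
  -- The preimage of `u` is the positive root of `t² - u t - a`.
  have hsq : √(u ^ 2 + 4 * a) ^ 2 = u ^ 2 + 4 * a := Real.sq_sqrt (by positivity)
  have habs : |u| < √(u ^ 2 + 4 * a) := Real.lt_sqrt_of_sq_lt (by rw [sq_abs]; linarith)
  have hpos : 0 < u + √(u ^ 2 + 4 * a) := by linarith [neg_abs_le u]
  refine ⟨(u + √(u ^ 2 + 4 * a)) / 2, half_pos hpos, ?_⟩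
  field_simp
  linear_combination hsq

lemma image_div_Ioi (ha : 0 < a) : (fun t : ℝ ↦ a / t) '' Ioi 0 = Ioi 0 := by
  ext y
  refine ⟨?_, fun hy ↦ ⟨a / y, div_pos ha hy, div_div_cancel₀ ha.ne'⟩⟩
  rintro ⟨t, ht, rfl⟩
  exact div_pos ha ht

variable [NormedSpace ℝ E]

lemma integral_one_add_div_sq_smul_comp_sub_div (ha : 0 < a) (f : ℝ → E) :
    ∫ t in Ioi (0 : ℝ), (1 + a / t ^ 2) • f (t - a / t) = ∫ u, f u := by
  rw [← integral_image_eq_integral_deriv_smul_of_monotoneOn measurableSet_Ioi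
    (fun t ht ↦ (hasDerivAt_sub_div a (ne_of_gt ht)).hasDerivWithinAt)
    (strictMonoOn_sub_div ha.le).monotoneOn f, image_sub_div_Ioi ha, setIntegral_univ]

lemma integrableOn_one_add_div_sq_smul_comp_sub_div_iff (ha : 0 < a) (f : ℝ → E) :
    IntegrableOn (fun t ↦ (1 + a / t ^ 2) • f (t - a / t)) (Ioi 0) ↔ Integrable f := by
  rw [← integrableOn_image_iff_integrableOn_deriv_smul_of_monotoneOn measurableSet_Ioi
    (fun t ht ↦ (hasDerivAt_sub_div a (ne_of_gt ht)).hasDerivWithinAt)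
    (strictMonoOn_sub_div ha.le).monotoneOn f, image_sub_div_Ioi ha, integrableOn_univ]

lemma integrableOn_comp_sub_div (ha : 0 < a) {f : ℝ → E} (hf : Integrable f) :
    IntegrableOn (fun t ↦ f (t - a / t)) (Ioi 0) := by
  have hbound (t : ℝ) : ‖(1 + a / t ^ 2)⁻¹‖ ≤ 1 := by
    rw [norm_inv, Real.norm_of_nonneg (by positivity)]
    exact inv_le_one_of_one_le₀ (le_add_of_nonneg_right (by positivity))
  exact (((integrableOn_one_add_div_sq_smul_comp_sub_div_iff ha f).2 hf).bdd_smul 1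
    (Measurable.aestronglyMeasurable (by fun_prop)) (.of_forall hbound)).congr
      (.of_forall fun t ↦ inv_smul_smul₀ (by positivity) _)

lemma integral_div_sq_smul_comp_div (ha : 0 < a) (g : ℝ → E) :
    ∫ t in Ioi (0 : ℝ), (a / t ^ 2) • g (a / t) = ∫ t in Ioi (0 : ℝ), g t := by
  have hsubst := integral_image_eq_integral_deriv_smul_of_antitoneOn measurableSet_Ioi
    (fun t ht ↦ (hasDerivAt_const_div a (ne_of_gt ht)).hasDerivWithinAt)
    (antitoneOn_const_div ha.le) g
  simpa only [image_div_Ioi ha, neg_div, neg_neg] using hsubst.symm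

lemma integral_div_sq_smul_comp_sub_div_of_even (ha : 0 < a) {f : ℝ → E} (heven : f.Even) :
    ∫ t in Ioi (0 : ℝ), (a / t ^ 2) • f (t - a / t) = ∫ t in Ioi (0 : ℝ), f (t - a / t) := by
  rw [← integral_div_sq_smul_comp_div ha fun t ↦ f (t - a / t)]
  congr! 3 with t
  rw [div_div_cancel₀ ha.ne', ← neg_sub, heven]

lemma integral_eq_two_smul_setIntegral_Ioi_of_even {f : ℝ → E} (hf : Integrable f)
    (heven : f.Even) : ∫ t, f t = (2 : ℝ) • ∫ t in Ioi (0 : ℝ), f t := by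
  have hreflect := integral_comp_neg_Ioi 0 f
  simp only [heven _, neg_zero] at hreflect
  rw [← intervalIntegral.integral_Iic_add_Ioi hf.integrableOn hf.integrableOn, ← hreflect, two_smul]

theorem integral_comp_sub_div_Ioi_of_even (ha : 0 ≤ a) {f : ℝ → E} (hf : Integrable f)
    (heven : f.Even) : ∫ t in Ioi (0 : ℝ), f (t - a / t) = ∫ t in Ioi (0 : ℝ), f t := by
  obtain rfl | ha := ha.eq_or_lt
  · simp only [zero_div, sub_zero]
  have hcomp := integrableOn_comp_sub_div ha hf
  have hreflected : IntegrableOn (fun t ↦ (a / t ^ 2) • f (t - a / t)) (Ioi 0) := by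
    refine (((integrableOn_one_add_div_sq_smul_comp_sub_div_iff ha f).2 hf).sub hcomp).congr
      (.of_forall fun t ↦ ?_)
    simp only [Pi.sub_apply, add_smul, one_smul, add_sub_cancel_left]
  refine smul_right_injective E (two_ne_zero' ℝ) ?_
  calc (2 : ℝ) • ∫ t in Ioi (0 : ℝ), f (t - a / t)
      = (∫ t in Ioi (0 : ℝ), f (t - a / t)) + ∫ t in Ioi (0 : ℝ), (a / t ^ 2) • f (t - a / t) := by
        rw [integral_div_sq_smul_comp_sub_div_of_even ha heven, two_smul]
    _ = ∫ t in Ioi (0 : ℝ), (1 + a / t ^ 2) • f (t - a / t) := by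
        simp only [add_smul, one_smul, integral_add hcomp hreflected]
    _ = ∫ u, f u := integral_one_add_div_sq_smul_comp_sub_div ha f
    _ = (2 : ℝ) • ∫ t in Ioi (0 : ℝ), f t := integral_eq_two_smul_setIntegral_Ioi_of_even hf heven

end CauchySchlomilch

section GaussianIntegrals

open Real Set

theorem integral_exp_neg_mul_sq_sub_div_sq_Ioi {p q : ℝ} (hp : 0 < p) (hq : 0 ≤ q) :
    ∫ t in Ioi (0 : ℝ), exp (-p * t ^ 2 - q / t ^ 2) = √(π / p) / 2 * exp (-2 * √(p * q)) := by
  have hcross : p * √(q / p) = √(p * q) := by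
    rw [sqrt_div hq, sqrt_mul hp.le, mul_div_left_comm, div_sqrt, mul_comm]
  have hsquare (t : ℝ) (ht : t ∈ Ioi 0) : exp (-p * t ^ 2 - q / t ^ 2) =
      exp (-2 * √(p * q)) * exp (-p * (t - √(q / p) / t) ^ 2) := by
    have ht : t ≠ 0 := ne_of_gt ht
    have hlast : p * √(q / p) ^ 2 = q := by rw [sq_sqrt (by positivity), mul_div_cancel₀ q hp.ne']
    rw [← exp_add, ← hcross]
    congr 1
    field_simp
    linear_combination hlast
  rw [setIntegral_congr_fun measurableSet_Ioi hsquare, integral_const_mul,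
    integral_comp_sub_div_Ioi_of_even (sqrt_nonneg _) (integrable_exp_neg_mul_sq hp)
      (fun t ↦ by rw [neg_sq]), integral_gaussian_Ioi, mul_comm]

lemma integral_inv_sqrt_smul_Ioi {E : Type*} [NormedAddCommGroup E] [NormedSpace ℝ E]
    (g : ℝ → E) :
    ∫ s in Ioi (0 : ℝ), (√s)⁻¹ • g s = (2 : ℝ) • ∫ t in Ioi (0 : ℝ), g (t ^ 2) := by
  rw [← integral_comp_rpow_Ioi_of_pos two_pos, ← integral_smul]
  refine setIntegral_congr_fun measurableSet_Ioi fun t ht ↦ ?_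
  have ht : 0 < t := ht
  have hexp : (2 : ℝ) - 1 = 1 := by norm_num
  simp only [hexp, rpow_one, rpow_two, sqrt_sq ht.le, mul_smul, smul_inv_smul₀ ht.ne']

theorem integral_normal_mul_exponential_Ioi {ℓ : ℝ} (hℓ : 0 < ℓ) (z : ℝ) :
    ∫ s in Ioi (0 : ℝ), (1 / √(2 * π * s)) * exp (-z ^ 2 / (2 * s)) * (ℓ * exp (-ℓ * s)) =
      √(2 * ℓ) / 2 * exp (-√(2 * ℓ) * |z|) := by
  have hintegrand (s : ℝ) :
      (1 / √(2 * π * s)) * exp (-z ^ 2 / (2 * s)) * (ℓ * exp (-ℓ * s)) =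
        ℓ / √(2 * π) * ((√s)⁻¹ • exp (-ℓ * s - z ^ 2 / 2 / s)) := by
    rw [sqrt_mul (by positivity), sub_eq_add_neg, exp_add, div_div, neg_div, smul_eq_mul]
    ring
  have hexponent : 2 * √(ℓ * (z ^ 2 / 2)) = √(2 * ℓ) * |z| := by
    have hsquare : ℓ * (z ^ 2 / 2) = (√(2 * ℓ) * |z| / 2) ^ 2 := by
      rw [div_pow, mul_pow, sq_sqrt (by positivity), sq_abs]
      ring
    rw [hsquare, sqrt_sq (by positivity), mul_div_cancel₀ _ two_ne_zero]
  have hconst : ℓ / √(2 * π) * √(π / ℓ) = √(2 * ℓ) / 2 := by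
    rw [sqrt_div pi_pos.le, sqrt_mul zero_le_two, sqrt_mul zero_le_two]
    field_simp
    rw [sq_sqrt hℓ.le, sq_sqrt zero_le_two, mul_comm]
  simp only [hintegrand]
  rw [integral_const_mul, integral_inv_sqrt_smul_Ioi,
    integral_exp_neg_mul_sq_sub_div_sq_Ioi hℓ (by positivity), neg_mul, hexponent, ← hconst,
    smul_eq_mul, neg_mul]
  ring

end GaussianIntegrals

/-- Scale-mixture-of-normals representation of the Laplace density: for every `b > 0`
and `z ∈ ℝ`, `(1/(2b)) exp(-|z|/b) = ∫₀^∞ N(z; 0, σ²) · ℓ e^{-ℓ σ²} dσ²` with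
`ℓ = 1/(2b²)`. -/
theorem laplace_eq_scale_mixture_of_normals
    (b : ℝ) (hb : 0 < b) (z : ℝ) (ℓ : ℝ) (hℓ : ℓ = 1 / (2 * b ^ 2)) :
    (1 / (2 * b)) * Real.exp (-|z| / b)
      = ∫ s in Set.Ioi (0 : ℝ),
          (1 / Real.sqrt (2 * Real.pi * s)) * Real.exp (-z ^ 2 / (2 * s))
            * (ℓ * Real.exp (-ℓ * s)) := by
  have hℓ_pos : 0 < ℓ := by rw [hℓ]; positivity
  have hsqrt : √(2 * ℓ) = 1 / b := by
    rw [Real.sqrt_eq_iff_mul_self_eq (by positivity) (by positivity), hℓ]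
    field_simp
  rw [integral_normal_mul_exponential_Ioi hℓ_pos, hsqrt]
  ring_nf
end
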